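/- arXiv:2112.08456 — 3 statements merged into one kernel-verified Lean document; each statement's English description precedes it below -/
import Mathlib

section
/- Let P be a set of n ≥ 5 points in the plane in convex position. Then every partition of the edge set of the complete geometric graph K(P) into classes each of which is 1-plane uses at least ⌈n/3⌉ classes. -/
/-- Points of the plane. -/
abbrev Pt : Type := ℝ × ℝ

/-- A finite point set is in general position if no three of its points are collinear. -/
def GenPos (P : Finset Pt) : Prop :=
  ∀ p ∈ P, ∀ q ∈ P, ∀ r ∈ P, p ≠ q → p ≠ r → q ≠ r →
    ¬ Collinear ℝ ({p, q, r} : Set Pt)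

/-- A finite point set is in convex position: general position and no point lies in the
convex hull of the others. -/
def ConvexPos (P : Finset Pt) : Prop :=
  GenPos P ∧ ∀ p ∈ P, p ∉ convexHull ℝ ((P.erase p : Finset Pt) : Set Pt)

/-- The edge set of the complete geometric graph on `P`: all unordered pairs of
distinct points of `P`. -/
def KEdges (P : Finset Pt) : Set (Sym2 Pt) :=
  {e | ∃ p ∈ P, ∃ q ∈ P, p ≠ q ∧ e = s(p, q)}

/-- Two edges cross: they share no endpoint and their open segments intersect. -/
def Cross (e f : Sym2 Pt) : Prop :=
  (∀ x, x ∈ e → x ∉ f) ∧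
    ∃ p q r s : Pt, e = s(p, q) ∧ f = s(r, s) ∧
      (openSegment ℝ p q ∩ openSegment ℝ r s).Nonempty

/-- A set of edges is `k`-plane if each of its edges crosses at most `k` other edges
of the set. -/
def KPlane (k : ℕ) (E : Set (Sym2 Pt)) : Prop :=
  ∀ e ∈ E, {f | f ∈ E ∧ Cross e f}.ncard ≤ k

/-- A set of edges is `k`-quasi-plane if it contains no `k` pairwise crossing edges. -/
def KQuasiPlane (k : ℕ) (E : Set (Sym2 Pt)) : Prop :=
  ¬ ∃ S : Finset (Sym2 Pt), ↑S ⊆ E ∧ S.card = k ∧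
      (S : Set (Sym2 Pt)).Pairwise Cross

/-- The set of crossing pairs (unordered) of a set of edges. -/
def CrossPairs (E : Set (Sym2 Pt)) : Set (Sym2 (Sym2 Pt)) :=
  {c | ∃ e ∈ E, ∃ f ∈ E, Cross e f ∧ c = s(e, f)}

/-- A crossing family in `K(P)`: a finite set of pairwise crossing edges of `K(P)`. -/
def CrossingFamily (P : Finset Pt) (S : Finset (Sym2 Pt)) : Prop :=
  ↑S ⊆ KEdges P ∧ (S : Set (Sym2 Pt)).Pairwise Cross

/-- `E` forms a spanning tree on the point set `P`: all edges are edges of `K(P)` and the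
corresponding graph on the points of `P` is connected and acyclic. -/
def IsSpanningTreeOn (P : Finset Pt) (E : Set (Sym2 Pt)) : Prop :=
  E ⊆ KEdges P ∧
    (SimpleGraph.fromRel (fun a b : {x // x ∈ P} => s((a : Pt), (b : Pt)) ∈ E)).IsTree

/-- Combinatorial crossing of chords, as ordered pairs of indices. -/
def XC (e f : ℕ × ℕ) : Prop :=
  (e.1 < f.1 ∧ f.1 < e.2 ∧ e.2 < f.2) ∨ (f.1 < e.1 ∧ e.1 < f.2 ∧ f.2 < e.2)

lemma plane_bound (S : Finset ℕ) (hS : 2 ≤ S.card) (E : Finset (ℕ × ℕ))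
    (hE : ∀ e ∈ E, e.1 ∈ S ∧ e.2 ∈ S ∧ e.1 < e.2)
    (hX : ∀ e ∈ E, ∀ f ∈ E, ¬ XC e f) : E.card + 3 ≤ 2 * S.card := by
  classical
  have hne : S.Nonempty := Finset.card_pos.mp (by omega)
  set M := S.max' hne with hM
  set m := S.min' hne with hm
  have hMS : M ∈ S := S.max'_mem hne
  have hmS : m ∈ S := S.min'_mem hne
  have hle : ∀ x ∈ S, x ≤ M := fun x hx => S.le_max' x hx
  have hge : ∀ x ∈ S, m ≤ x := fun x hx => S.min'_le x hx
  have hmM : m < M := by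
    obtain ⟨x, hx, y, hy, hxy⟩ := Finset.one_lt_card.mp (show 1 < S.card by omega)
    have := hle x hx; have := hle y hy; have := hge x hx; have := hge y hy
    omega
  set A := E.filter (fun e => ∃ e' ∈ E, e'.1 = e.1 ∧ e.2 < e'.2) with hA
  set B := E.filter (fun e => ¬ ∃ e' ∈ E, e'.1 = e.1 ∧ e.2 < e'.2) with hB
  have hAB : A.card + B.card = E.card := Finset.card_filter_add_card_filter_not _
  have h1 : B.card ≤ (S.erase M).card := by
    apply Finset.card_le_card_of_injOn (fun e => e.1)
    · intro e he
      simp only [hB, Finset.coe_filter, Set.mem_ofPred_eq] at he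
      have h := hE e he.1
      have := hle _ h.2.1
      simp only [Finset.coe_erase, Set.mem_sdiff, Finset.mem_coe, Set.mem_singleton_iff]
      exact ⟨h.1, by omega⟩
    · intro e he f hf hef
      simp only [hB, Finset.coe_filter, Set.mem_ofPred_eq] at he hf
      simp only at hef
      have h1 : ¬ e.2 < f.2 := fun h => he.2 ⟨f, hf.1, hef.symm, h⟩
      have h2 : ¬ f.2 < e.2 := fun h => hf.2 ⟨e, he.1, hef, h⟩
      exact Prod.ext hef (by omega)
  have h2 : A.card ≤ ((S.erase M).erase m).card := by
    apply Finset.card_le_card_of_injOn (fun e => e.2)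
    · intro e he
      simp only [hA, Finset.coe_filter, Set.mem_ofPred_eq] at he
      obtain ⟨he, e', he', h1, h2⟩ := he
      have h := hE e he
      have h' := hE e' he'
      have := hle _ h'.2.1
      have := hge _ h.1
      simp only [Finset.mem_coe, Finset.mem_erase]
      exact ⟨by omega, by omega, h.2.1⟩
    · have key : ∀ e ∈ A, ∀ f ∈ A, e.2 = f.2 → ¬ e.1 < f.1 := by
        intro e he f hf hef hlt
        simp only [hA, Finset.mem_filter] at he hf
        obtain ⟨hf, f', hf', h1, h2⟩ := hf
        have := (hE f hf).2.2
        exact hX e he.1 f' hf' (Or.inl ⟨by omega, by omega, by omega⟩)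
      intro e he f hf hef
      have h1 := key e he f hf hef
      have h2 := key f hf e he hef.symm
      exact Prod.ext (by omega) hef
  have c1 : (S.erase M).card = S.card - 1 := Finset.card_erase_of_mem hMS
  have c2 : ((S.erase M).erase m).card = (S.erase M).card - 1 :=
    Finset.card_erase_of_mem (Finset.mem_erase.mpr ⟨by omega, hmS⟩)
  omega

lemma oneplane_bound (S : Finset ℕ) : ∀ (_ : 2 ≤ S.card) (E : Finset (ℕ × ℕ))
    (_ : ∀ e ∈ E, e.1 ∈ S ∧ e.2 ∈ S ∧ e.1 < e.2)
    (_ : ∀ e ∈ E, ∀ f ∈ E, ∀ g ∈ E, XC e f → XC e g → f = g),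
    2 * E.card + 8 ≤ 5 * S.card := by
  classical
  induction S using Finset.strongInduction with
  | H S ih =>
  intro hS E hE hX
  by_cases hc : ∃ e ∈ E, ∃ f ∈ E, XC e f
  · have : ∃ a b c d, (a, c) ∈ E ∧ (b, d) ∈ E ∧ a < b ∧ b < c ∧ c < d := by
      obtain ⟨e, he, f, hf, h | h⟩ := hc
      · exact ⟨e.1, f.1, e.2, f.2, he, hf, h⟩
      · exact ⟨f.1, e.1, f.2, e.2, hf, he, h⟩
    obtain ⟨a, b, c, d, hac, hbd, hab, hbc, hcd⟩ := this
    have ha := (hE _ hac).1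
    have hc' := (hE _ hac).2.1
    have hb := (hE _ hbd).1
    have hd := (hE _ hbd).2.1
    simp only at ha hb hc' hd
    have gen : ∀ (p : ℕ → Prop) [DecidablePred p] (x y z : ℕ), x ∈ S → y ∈ S → z ∈ S → x ≠ y → p x → p y →
        ¬ p z → 2 * (E.filter (fun e => p e.1 ∧ p e.2)).card + 8 ≤ 5 * (S.filter p).card := by
      intro p _ x y z hx hy hz hxy px py pz
      apply ih
      · refine Finset.filter_ssubset.mpr ⟨z, hz, pz⟩
      · exact Finset.one_lt_card.mpr ⟨x, by simp [hx, px], y, by simp [hy, py], hxy⟩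
      · intro e he
        simp only [Finset.mem_filter] at he ⊢
        have := hE e he.1
        tauto
      · intro e he f hf g hg
        exact hX e (Finset.mem_filter.mp he).1 f (Finset.mem_filter.mp hf).1 g
          (Finset.mem_filter.mp hg).1
    have i1 := gen (fun x => a ≤ x ∧ x ≤ b) a b c ha hb hc' (by omega) (by omega) (by omega)
      (by omega)
    have i2 := gen (fun x => b ≤ x ∧ x ≤ c) b c a hb hc' ha (by omega) (by omega) (by omega)
      (by omega)
    have i3 := gen (fun x => c ≤ x ∧ x ≤ d) c d a hc' hd ha (by omega) (by omega) (by omega)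
      (by omega)
    have i4 := gen (fun x => x ≤ a ∨ d ≤ x) a d b ha hd hb (by omega) (by omega) (by omega)
      (by omega)
    beta_reduce at i1 i2 i3 i4
    have hcov : E ⊆ {(a, c), (b, d)} ∪
        (E.filter (fun e => (a ≤ e.1 ∧ e.1 ≤ b) ∧ (a ≤ e.2 ∧ e.2 ≤ b)) ∪
        (E.filter (fun e => (b ≤ e.1 ∧ e.1 ≤ c) ∧ (b ≤ e.2 ∧ e.2 ≤ c)) ∪
        (E.filter (fun e => (c ≤ e.1 ∧ e.1 ≤ d) ∧ (c ≤ e.2 ∧ e.2 ≤ d)) ∪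
        (E.filter (fun e => (e.1 ≤ a ∨ d ≤ e.1) ∧ (e.2 ≤ a ∨ d ≤ e.2)))))) := by
      rintro ⟨u, v⟩ he
      have huv := (hE _ he).2.2
      simp only at huv
      have h1 : XC (a, c) (u, v) → (u, v) = (b, d) := fun h =>
        hX _ hac _ he _ hbd h (Or.inl ⟨hab, hbc, hcd⟩)
      have h2 : XC (b, d) (u, v) → (u, v) = (a, c) := fun h =>
        hX _ hbd _ he _ hac h (Or.inr ⟨hab, hbc, hcd⟩)
      simp only [Finset.mem_union, Finset.mem_insert, Finset.mem_singleton, Finset.mem_filter, he,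
        true_and]
      by_cases x1 : XC (a, c) (u, v)
      · exact Or.inl (Or.inr (h1 x1))
      by_cases x2 : XC (b, d) (u, v)
      · exact Or.inl (Or.inl (h2 x2))
      right
      simp only [XC] at x1 x2
      omega
    have hcard := (Finset.card_le_card hcov).trans (Finset.card_union_le _ _)
    have k1 := Finset.card_le_two (a := (a, c)) (b := (b, d))
    have k2 := Finset.card_union_le
        (E.filter (fun e => (a ≤ e.1 ∧ e.1 ≤ b) ∧ (a ≤ e.2 ∧ e.2 ≤ b)))
        (E.filter (fun e => (b ≤ e.1 ∧ e.1 ≤ c) ∧ (b ≤ e.2 ∧ e.2 ≤ c)) ∪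
        (E.filter (fun e => (c ≤ e.1 ∧ e.1 ≤ d) ∧ (c ≤ e.2 ∧ e.2 ≤ d)) ∪
        (E.filter (fun e => (e.1 ≤ a ∨ d ≤ e.1) ∧ (e.2 ≤ a ∨ d ≤ e.2)))))
    have k3 := Finset.card_union_le
        (E.filter (fun e => (b ≤ e.1 ∧ e.1 ≤ c) ∧ (b ≤ e.2 ∧ e.2 ≤ c)))
        (E.filter (fun e => (c ≤ e.1 ∧ e.1 ≤ d) ∧ (c ≤ e.2 ∧ e.2 ≤ d)) ∪
        (E.filter (fun e => (e.1 ≤ a ∨ d ≤ e.1) ∧ (e.2 ≤ a ∨ d ≤ e.2))))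
    have k4 := Finset.card_union_le
        (E.filter (fun e => (c ≤ e.1 ∧ e.1 ≤ d) ∧ (c ≤ e.2 ∧ e.2 ≤ d)))
        (E.filter (fun e => (e.1 ≤ a ∨ d ≤ e.1) ∧ (e.2 ≤ a ∨ d ≤ e.2)))
    have hs : (S.filter (fun x => a ≤ x ∧ x ≤ b)).card + (S.filter (fun x => b ≤ x ∧ x ≤ c)).card
        + (S.filter (fun x => c ≤ x ∧ x ≤ d)).card + (S.filter (fun x => x ≤ a ∨ d ≤ x)).card
        ≤ S.card + (S.filter (fun x => x = a)).card + (S.filter (fun x => x = b)).card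
        + (S.filter (fun x => x = c)).card + (S.filter (fun x => x = d)).card := by
      rw [Finset.card_eq_sum_ones S]
      simp only [Finset.card_filter, ← Finset.sum_add_distrib]
      apply Finset.sum_le_sum
      intro x _
      split_ifs <;> omega
    have one : ∀ t, (S.filter (fun x => x = t)).card ≤ 1 := by
      intro t
      apply Finset.card_le_one.mpr
      intro x hx y hy
      rw [(Finset.mem_filter.mp hx).2, (Finset.mem_filter.mp hy).2]
    have := one a; have := one b; have := one c; have := one d
    omega
  · push Not at hc
    have := plane_bound S hS E hE hc
    omega

/-- Orientation determinant. -/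
def ori (a b c : Pt) : ℝ := (b.1 - a.1) * (c.2 - a.2) - (b.2 - a.2) * (c.1 - a.1)

lemma collinear_of_ori {a b c : Pt} (hab : a ≠ b) (h : ori a b c = 0) :
    Collinear ℝ ({a, b, c} : Set Pt) := by
  rw [collinear_iff_of_mem (p₀ := a) (by simp)]
  refine ⟨b - a, ?_⟩
  intro p hp
  simp only [Set.mem_insert_iff, Set.mem_singleton_iff] at hp
  simp only [ori] at h
  rcases hp with rfl | rfl | rfl
  · exact ⟨0, by simp⟩
  · exact ⟨1, by simp⟩
  · by_cases h1 : b.1 - a.1 = 0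
    · have h2 : b.2 - a.2 ≠ 0 := by
        intro h2; exact hab (Prod.ext (by linarith) (by linarith))
      refine ⟨(p.2 - a.2) / (b.2 - a.2), ?_⟩
      have h3 : (p.1 - a.1) = 0 := by
        rw [h1] at h
        have : (b.2 - a.2) * (p.1 - a.1) = 0 := by linarith
        exact (mul_eq_zero.mp this).resolve_left h2
      ext
      · simp [h1]; linarith
      · simp; field_simp; ring
    · refine ⟨(p.1 - a.1) / (b.1 - a.1), ?_⟩
      ext
      · simp; field_simp; ring
      · simp; field_simp; linarith

lemma cross_point {a b c d : Pt} (hA : 0 < ori b c d) (hB : 0 < ori a c d) (hC : 0 < ori a b d)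
    (hD : 0 < ori a b c) : (openSegment ℝ a c ∩ openSegment ℝ b d).Nonempty := by
  have hsum : ori b c d + ori a b d = ori a c d + ori a b c := by simp only [ori]; ring
  have hpos : 0 < ori b c d + ori a b d := by linarith
  refine ⟨(ori b c d / (ori b c d + ori a b d)) • a + (ori a b d / (ori b c d + ori a b d)) • c,
    ⟨_, _, by positivity, by positivity, by field_simp, rfl⟩,
    ⟨ori a c d / (ori b c d + ori a b d), ori a b c / (ori b c d + ori a b d), by positivity,
      by positivity, by rw [hsum]; field_simp, ?_⟩⟩
  ext
  · simp only [Prod.fst_add, Prod.smul_fst, smul_eq_mul]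
    field_simp
    simp only [ori]; ring
  · simp only [Prod.snd_add, Prod.smul_snd, smul_eq_mul]
    field_simp
    simp only [ori]; ring

/-- `b` lies in the triangle `p a c` when its orientation is wrong. -/
lemma in_triangle {p a b c : Pt} (h1 : 0 < ori p a b) (h2 : 0 < ori p b c)
    (h4 : ori a b c ≤ 0) {s : Set Pt} (hp : p ∈ s) (ha : a ∈ s) (hc : c ∈ s) :
    b ∈ convexHull ℝ s := by
  have hsum : ori p a b + ori p b c - ori a b c = ori p a c := by simp only [ori]; ring
  have hpos : 0 < ori p a c := by linarith
  have hb : b = (- ori a b c / ori p a c) • p + (ori p b c / ori p a c) • a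
      + (ori p a b / ori p a c) • c := by
    ext
    · simp only [Prod.fst_add, Prod.smul_fst, smul_eq_mul]
      field_simp
      simp only [ori]; ring
    · simp only [Prod.snd_add, Prod.smul_snd, smul_eq_mul]
      field_simp
      simp only [ori]; ring
  rw [hb]
  have hconv := convex_convexHull ℝ s
  have := hconv.sum_mem (t := Finset.univ) (w := ![- ori a b c / ori p a c,
    ori p b c / ori p a c, ori p a b / ori p a c]) (z := ![p, a, c]) ?_ ?_ ?_
  · simpa [Fin.sum_univ_three] using this
  · intro i _
    fin_cases i
    · exact div_nonneg (by linarith) hpos.le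
    · exact div_nonneg h2.le hpos.le
    · exact div_nonneg h1.le hpos.le
  · simp only [Fin.sum_univ_three, Matrix.cons_val]
    field_simp
    linarith
  · intro i _
    fin_cases i
    · exact subset_convexHull ℝ s hp
    · exact subset_convexHull ℝ s ha
    · exact subset_convexHull ℝ s hc

lemma ori_trans {p x y z : Pt} (hx : p.1 < x.1 ∨ p.1 = x.1 ∧ p.2 < x.2)
    (hy : p.1 < y.1 ∨ p.1 = y.1 ∧ p.2 < y.2) (hz : p.1 < z.1 ∨ p.1 = z.1 ∧ p.2 < z.2)
    (h1 : 0 < ori p x y) (h2 : 0 < ori p y z) : 0 < ori p x z := by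
  have i1 : ori p x z * (y.1 - p.1) = ori p y z * (x.1 - p.1) + ori p x y * (z.1 - p.1) := by
    simp only [ori]; ring
  have i2 : ori p x z * (y.2 - p.2) = ori p y z * (x.2 - p.2) + ori p x y * (z.2 - p.2) := by
    simp only [ori]; ring
  have gx : 0 ≤ x.1 - p.1 := by rcases hx with h | h <;> linarith
  have gz : 0 ≤ z.1 - p.1 := by rcases hz with h | h <;> linarith
  rcases hy with hy | ⟨hy, hy'⟩
  · have hyp : 0 < y.1 - p.1 := by linarith
    have : 0 < ori p x z * (y.1 - p.1) := by
      rw [i1]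
      rcases hx with hx | hx
      · have := mul_pos h2 (sub_pos.mpr hx)
        have := mul_nonneg h1.le gz
        linarith
      · rcases hz with hz | hz
        · have := mul_pos h1 (sub_pos.mpr hz)
          have := mul_nonneg h2.le gx
          linarith
        · exfalso
          -- x, z both vertical: contradiction in signs
          simp only [ori] at h1 h2
          have e1 : x.1 - p.1 = 0 := by linarith
          have : 0 < (x.2 - p.2) * (y.1 - p.1) := mul_pos (by linarith) hyp
          rw [e1] at h1
          linarith
    exact (mul_pos_iff_of_pos_right hyp).mp this
  · have e1 : y.1 - p.1 = 0 := by linarith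
    simp only [ori] at h2
    rw [e1] at h2
    have : 0 ≤ (y.2 - p.2) * (z.1 - p.1) := mul_nonneg (by linarith) gz
    linarith

lemma exists_enum (P : Finset Pt) (hP : ConvexPos P) (hne : P.Nonempty) :
    ∃ f : ℕ → Pt, (∀ k < P.card, f k ∈ P) ∧
      (∀ j < P.card, ∀ k < P.card, f j = f k → j = k) ∧
      ∀ a b c d, a < b → b < c → c < d → d < P.card →
        (openSegment ℝ (f a) (f c) ∩ openSegment ℝ (f b) (f d)).Nonempty := by
  classical
  obtain ⟨p, hp, hmin⟩ := Finset.exists_min_image P (fun x => toLex x) hne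
  have hlex : ∀ x ∈ P, x ≠ p → p.1 < x.1 ∨ p.1 = x.1 ∧ p.2 < x.2 := by
    intro x hx hxp
    have h := hmin x hx
    have h' : toLex p < toLex x := lt_of_le_of_ne h (fun h => hxp (toLex.injective h).symm)
    simpa [Prod.Lex.lt_iff] using h'
  set r : Pt → Pt → Prop := fun x y => y ≠ p ∧ (x = p ∨ 0 < ori p x y) with hr
  have antis : ∀ x y, ori p x y = - ori p y x := by intro x y; simp only [ori]; ring
  have self0 : ∀ x, ori p x x = 0 := by intro x; simp only [ori]; ring
  have self1 : ∀ x, ori p x p = 0 := by intro x; simp only [ori]; ring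
  have self2 : ∀ x, ori p p x = 0 := by intro x; simp only [ori]; ring
  have irr : ∀ x, ¬ r x x := by
    rintro x ⟨h1, h2 | h2⟩
    · exact h1 h2
    · rw [self0] at h2; exact lt_irrefl _ h2
  have tri : ∀ x ∈ P, ∀ y ∈ P, x ≠ y → r x y ∨ r y x := by
    intro x hx y hy hxy
    by_cases h1 : x = p
    · left; exact ⟨by rintro rfl; exact hxy h1, Or.inl h1⟩
    by_cases h2 : y = p
    · right; exact ⟨h1, Or.inl h2⟩
    have : ori p x y ≠ 0 := fun h =>
      hP.1 p hp x hx y hy (Ne.symm h1) (Ne.symm h2) hxy (collinear_of_ori (Ne.symm h1) h)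
    rcases lt_or_gt_of_ne this with h | h
    · right; exact ⟨h1, Or.inr (by rw [antis]; linarith)⟩
    · left; exact ⟨h2, Or.inr h⟩
  have trans : ∀ x ∈ P, ∀ y ∈ P, ∀ z ∈ P, r x y → r y z → r x z := by
    rintro x hx y hy z hz ⟨h1, h2⟩ ⟨h3, h4⟩
    refine ⟨h3, ?_⟩
    by_cases hxp : x = p
    · exact Or.inl hxp
    right
    exact ori_trans (hlex x hx hxp) (hlex y hy h1) (hlex z hz h3) (h2.resolve_left hxp)
      (h4.resolve_left h1)
  have pos : ∀ x ∈ P, ∀ y ∈ P, ∀ z ∈ P, r x y → r y z → 0 < ori x y z := by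
    intro x hx y hy z hz hxy hyz
    have hxz := trans x hx y hy z hz hxy hyz
    by_cases hxp : x = p
    · rw [hxp]; exact hyz.2.resolve_left hxy.1
    by_contra hcon
    have n1 : x ≠ y := by rintro rfl; exact irr _ hxy
    have n2 : z ≠ y := by rintro rfl; exact irr _ hyz
    refine hP.2 y hy (in_triangle (hxy.2.resolve_left hxp) (hyz.2.resolve_left hxy.1)
      (not_lt.mp hcon) (s := ((P.erase y : Finset Pt) : Set Pt)) ?_ ?_ ?_)
    · simp [hp, Ne.symm hxy.1]
    · simp [hx, n1]
    · simp [hz, n2]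
  set g : Pt → ℕ := fun x => (P.filter (fun y => r y x)).card with hg
  have gmono : ∀ x ∈ P, ∀ y ∈ P, r x y → g x < g y := by
    intro x hx y hy hxy
    apply Finset.card_lt_card
    refine Finset.ssubset_iff_subset_ne.mpr ⟨?_, ?_⟩
    · intro z hz
      simp only [Finset.mem_filter] at hz ⊢
      exact ⟨hz.1, trans z hz.1 x hx y hy hz.2 hxy⟩
    · intro h
      have : x ∈ P.filter (fun z => r z y) := by simp [hx, hxy]
      rw [← h] at this
      exact irr x (Finset.mem_filter.mp this).2
  have ginj : Set.InjOn g P := by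
    intro x hx y hy hxy
    by_contra hne
    rcases tri x hx y hy hne with h | h
    · exact absurd hxy (gmono x hx y hy h).ne
    · exact absurd hxy (gmono y hy x hx h).ne'
  have gr : ∀ x ∈ P, ∀ y ∈ P, g x < g y → r x y := by
    intro x hx y hy hxy
    rcases tri x hx y hy (by rintro rfl; exact lt_irrefl _ hxy) with h | h
    · exact h
    · exact absurd (gmono y hy x hx h) (by omega)
  have glt : ∀ x ∈ P, g x < P.card := by
    intro x hx
    apply Finset.card_lt_card
    exact Finset.filter_ssubset.mpr ⟨x, hx, irr x⟩
  have himg : P.image g = Finset.range P.card := by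
    apply Finset.eq_of_subset_of_card_le
    · intro k hk
      obtain ⟨x, hx, rfl⟩ := Finset.mem_image.mp hk
      exact Finset.mem_range.mpr (glt x hx)
    · rw [Finset.card_image_of_injOn ginj, Finset.card_range]
  have hsurj : ∀ k, ∃ x, k < P.card → x ∈ P ∧ g x = k := by
    intro k
    by_cases hk : k < P.card
    · have : k ∈ P.image g := by rw [himg]; exact Finset.mem_range.mpr hk
      obtain ⟨x, hx, hxk⟩ := Finset.mem_image.mp this
      exact ⟨x, fun _ => ⟨hx, hxk⟩⟩
    · exact ⟨p, fun h => absurd h hk⟩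
  choose f hf using hsurj
  refine ⟨f, fun k hk => (hf k hk).1, ?_, ?_⟩
  · intro j hj k hk h
    rw [← (hf j hj).2, ← (hf k hk).2, h]
  · intro a b c d hab hbc hcd hd
    have ha := hf a (by omega)
    have hb := hf b (by omega)
    have hc := hf c (by omega)
    have hd := hf d (by omega)
    have rab := gr _ ha.1 _ hb.1 (by omega)
    have rbc := gr _ hb.1 _ hc.1 (by omega)
    have rcd := gr _ hc.1 _ hd.1 (by omega)
    have rac := trans _ ha.1 _ hb.1 _ hc.1 rab rbc
    have rbd := trans _ hb.1 _ hc.1 _ hd.1 rbc rcd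
    exact cross_point (pos _ hb.1 _ hc.1 _ hd.1 rbc rcd) (pos _ ha.1 _ hc.1 _ hd.1 rac rcd)
      (pos _ ha.1 _ hb.1 _ hd.1 rab rbd) (pos _ ha.1 _ hb.1 _ hc.1 rab rbc)

lemma card_pairs (n : ℕ) :
    2 * ((Finset.range n ×ˢ Finset.range n).filter (fun e => e.1 < e.2)).card + n = n * n := by
  have h1 : ((Finset.range n ×ˢ Finset.range n).filter (fun e : ℕ × ℕ => e.1 < e.2)).card
      = ((Finset.range n ×ˢ Finset.range n).filter (fun e : ℕ × ℕ => e.2 < e.1)).card := by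
    apply Finset.card_bij (fun e _ => e.swap)
    · intro e he; simp at he ⊢; tauto
    · intro e _ f _ h; exact Prod.swap_injective h
    · intro e he
      exact ⟨e.swap, by simp at he ⊢; tauto, by simp⟩
  have h2 : ((Finset.range n ×ˢ Finset.range n).filter (fun e : ℕ × ℕ => e.1 = e.2)).card = n := by
    have : (Finset.range n ×ˢ Finset.range n).filter (fun e : ℕ × ℕ => e.1 = e.2)
        = (Finset.range n).diag := by
      ext e; simp [Finset.mem_diag]; omega
    rw [this, Finset.diag_card, Finset.card_range]
  have h3 : (Finset.range n ×ˢ Finset.range n).card = n * n := by simp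
  have h4 : ((Finset.range n ×ˢ Finset.range n).filter (fun e : ℕ × ℕ => e.1 < e.2)).card
      + ((Finset.range n ×ˢ Finset.range n).filter (fun e : ℕ × ℕ => e.2 < e.1)).card
      + ((Finset.range n ×ˢ Finset.range n).filter (fun e : ℕ × ℕ => e.1 = e.2)).card
      = (Finset.range n ×ˢ Finset.range n).card := by
    rw [Finset.card_eq_sum_ones (Finset.range n ×ˢ Finset.range n)]
    simp only [Finset.card_filter, ← Finset.sum_add_distrib]
    apply Finset.sum_congr rfl
    intro x _
    split_ifs <;> omega
  omega

/-- For `n ≥ 5` points in convex position, every partition of `K(P)` into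
1-plane classes uses at least `⌈n/3⌉` classes. -/
theorem stmt_1 (n : ℕ) (hn : 5 ≤ n) (P : Finset Pt) (hP : ConvexPos P) (hcard : P.card = n)
    (c : ℕ) (F : Fin c → Set (Sym2 Pt))
    (hunion : (⋃ i, F i) = KEdges P)
    (hdisj : Pairwise fun i j => Disjoint (F i) (F j))
    (hplane : ∀ i, KPlane 1 (F i)) :
    ⌈(n : ℝ) / 3⌉₊ ≤ c := by
  classical
  obtain ⟨f, hfP, hfinj, hfX⟩ := exists_enum P hP (Finset.card_pos.mp (by omega))
  rw [hcard] at hfP hfinj hfX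
  have hKfin : (KEdges P).Finite := by
    apply ((P ×ˢ P).image (fun e => s(e.1, e.2))).finite_toSet.subset
    rintro e ⟨x, hx, y, hy, _, rfl⟩
    simp only [Finset.coe_image, Set.mem_image, Finset.mem_coe]
    exact ⟨(x, y), Finset.mem_product.mpr ⟨hx, hy⟩, rfl⟩
  set T := (Finset.range n ×ˢ Finset.range n).filter (fun e => e.1 < e.2) with hT
  have memT : ∀ e : ℕ × ℕ, e ∈ T ↔ e.1 < e.2 ∧ e.2 < n := by
    intro e; simp [hT]; omega
  set H : Finset (ℕ × ℕ) := insert (0, n - 1) ((Finset.range (n - 1)).image (fun k => (k, k + 1)))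
    with hH
  have memH : ∀ e : ℕ × ℕ, e ∈ H ↔ (e.1 = 0 ∧ e.2 = n - 1) ∨ (e.2 = e.1 + 1 ∧ e.2 < n) := by
    rintro ⟨u, v⟩
    simp only [hH, Finset.mem_insert, Finset.mem_image, Finset.mem_range, Prod.mk.injEq]
    constructor
    · rintro (h | ⟨k, hk, h1, h2⟩) <;> omega
    · rintro (h | h)
      · exact Or.inl h
      · exact Or.inr ⟨u, by omega, rfl, by omega⟩
  have cardH : H.card = n := by
    rw [hH, Finset.card_insert_of_notMem, Finset.card_image_of_injective, Finset.card_range]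
    · omega
    · intro a b h; exact (Prod.mk.inj h).1
    · simp only [Finset.mem_image, Finset.mem_range, Prod.mk.injEq, not_exists]
      intro x; omega
  have HT : ∀ e ∈ H, e ∈ T := by
    intro e he; rw [memH] at he; rw [memT]; omega
  have HX : ∀ e ∈ T, ∀ g ∈ T, XC e g → e ∉ H ∧ g ∉ H := by
    intro e he g hg hx
    rw [memT] at he hg
    rw [memH, memH]
    simp only [XC] at hx
    omega
  set E : Fin c → Finset (ℕ × ℕ) := fun i => T.filter (fun e => s(f e.1, f e.2) ∈ F i) with hEdef
  have crossOf : ∀ e ∈ T, ∀ g ∈ T, XC e g → Cross s(f e.1, f e.2) s(f g.1, f g.2) := by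
    intro e he g hg hx
    rw [memT] at he hg
    refine ⟨?_, ?_⟩
    · intro x hx1 hx2
      rw [Sym2.mem_iff] at hx1 hx2
      simp only [XC] at hx
      rcases hx1 with rfl | rfl <;> rcases hx2 with h | h
      all_goals
        have := hfinj _ (by omega) _ (by omega) h
        omega
    · refine ⟨_, _, _, _, rfl, rfl, ?_⟩
      rcases hx with ⟨h1, h2, h3⟩ | ⟨h1, h2, h3⟩
      · exact hfX _ _ _ _ h1 h2 h3 hg.2
      · rw [Set.inter_comm]
        exact hfX _ _ _ _ h1 h2 h3 he.2
  have bound : ∀ i, 2 * (E i \ H).card + 8 ≤ 3 * n := by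
    intro i
    have hsub : ∀ e ∈ E i ∪ H, e ∈ T := by
      intro e he
      rcases Finset.mem_union.mp he with h | h
      · exact (Finset.mem_filter.mp h).1
      · exact HT e h
    have := oneplane_bound (Finset.range n) (by rw [Finset.card_range]; omega) (E i ∪ H) ?_ ?_
    · have h2 : (E i ∪ H).card = (E i \ H).card + H.card := by
        rw [← Finset.sdiff_union_self_eq_union, Finset.card_union_of_disjoint
          Finset.sdiff_disjoint]
      rw [Finset.card_range] at this
      omega
    · intro e he
      have := (memT e).mp (hsub e he)
      simp only [Finset.mem_range]
      omega
    · intro e he g hg h hh x1 x2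
      have te := hsub e he
      have tg := hsub g hg
      have th := hsub h hh
      have n1 := HX e te g tg x1
      have n2 := HX e te h th x2
      have e1 := (Finset.mem_filter.mp ((Finset.mem_union.mp he).resolve_right n1.1)).2
      have g1 := (Finset.mem_filter.mp ((Finset.mem_union.mp hg).resolve_right n1.2)).2
      have h1 := (Finset.mem_filter.mp ((Finset.mem_union.mp hh).resolve_right n2.2)).2
      have hfin : {q | q ∈ F i ∧ Cross s(f e.1, f e.2) q}.Finite := by
        apply hKfin.subset
        intro q hq
        rw [← hunion]
        exact Set.mem_iUnion.mpr ⟨i, hq.1⟩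
      have heq := (Set.ncard_le_one hfin).mp (hplane i _ e1) _ ⟨g1, crossOf e te g tg x1⟩ _
        ⟨h1, crossOf e te h th x2⟩
      rw [memT] at tg th
      rcases Sym2.eq_iff.mp heq with ⟨q1, q2⟩ | ⟨q1, q2⟩
      · exact Prod.ext (hfinj _ (by omega) _ (by omega) q1) (hfinj _ (by omega) _ (by omega) q2)
      · have := hfinj _ (by omega) _ (by omega) q1
        have := hfinj _ (by omega) _ (by omega) q2
        omega
  have hcov : T ⊆ (Finset.univ.biUnion (fun i => E i \ H)) ∪ H := by
    intro e he
    by_cases hh : e ∈ H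
    · exact Finset.mem_union_right _ hh
    apply Finset.mem_union_left
    have he' := (memT e).mp he
    have : s(f e.1, f e.2) ∈ KEdges P :=
      ⟨f e.1, hfP _ (by omega), f e.2, hfP _ (by omega),
        fun h => by have := hfinj _ (by omega) _ (by omega) h; omega, rfl⟩
    rw [← hunion] at this
    obtain ⟨i, hi⟩ := Set.mem_iUnion.mp this
    simp only [Finset.mem_biUnion, Finset.mem_univ, true_and, Finset.mem_sdiff]
    exact ⟨i, Finset.mem_filter.mpr ⟨he, hi⟩, hh⟩
  have c1 := (Finset.card_le_card hcov).trans (Finset.card_union_le _ _)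
  have c2 : (Finset.univ.biUnion (fun i => E i \ H)).card ≤ ∑ i, (E i \ H).card :=
    Finset.card_biUnion_le
  have c3 : ∑ i : Fin c, (2 * (E i \ H).card + 8) ≤ ∑ i : Fin c, 3 * n :=
    Finset.sum_le_sum (fun i _ => bound i)
  rw [Finset.sum_add_distrib, ← Finset.mul_sum] at c3
  simp only [Finset.sum_const, Finset.card_univ, Fintype.card_fin, smul_eq_mul] at c3
  have c4 := card_pairs n
  rw [← hT] at c4
  have key : n ≤ 3 * c := by
    by_contra hlt
    push Not at hlt
    have : n * n + c * 8 ≤ c * (3 * n) + 3 * n := by omega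
    zify at this hlt hn
    nlinarith
  rw [Nat.ceil_le, div_le_iff₀ (by norm_num)]
  have : (n : ℝ) ≤ ((3 * c : ℕ) : ℝ) := by exact_mod_cast key
  push_cast at this
  linarith
end

section
/- Let P be a set of n points in the plane in convex position and let k ≥ 1 be an integer. Then the edge set of the complete geometric graph K(P) can be partitioned into ⌈n/⌈√(2k)⌉⌉ classes such that each class, viewed as a geometric graph on P, is k-plane. -/
/-- Orientation determinant of three points. -/
def det3 (a b c : Pt) : ℝ := (b.1 - a.1) * (c.2 - a.2) - (b.2 - a.2) * (c.1 - a.1)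

lemma det3_collinear (a b c : Pt) (hab : a ≠ b) (h : det3 a b c = 0) :
    Collinear ℝ ({a, b, c} : Set Pt) := by
  rw [collinear_iff_of_mem (p₀ := a) (by simp)]
  refine ⟨b - a, ?_⟩
  unfold det3 at h
  intro p hp
  simp only [Set.mem_insert_iff, Set.mem_singleton_iff] at hp
  rcases hp with rfl | rfl | rfl
  · exact ⟨0, by simp⟩
  · exact ⟨1, by simp⟩
  · by_cases h1 : b.1 - a.1 = 0
    · have h2 : b.2 - a.2 ≠ 0 := by
        intro h2
        exact hab (Prod.ext (by linarith) (by linarith))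
      refine ⟨(p.2 - a.2) / (b.2 - a.2), ?_⟩
      have h3 : p.1 - a.1 = 0 := by
        rw [h1] at h
        have : (b.2 - a.2) * (p.1 - a.1) = 0 := by linarith
        exact (mul_eq_zero.mp this).resolve_left h2
      ext
      · simp [h1]; linarith
      · simp; field_simp; ring
    · refine ⟨(p.1 - a.1) / (b.1 - a.1), ?_⟩
      ext
      · simp; field_simp; ring
      · simp; field_simp; linarith

lemma mem_hull_of_det (S : Set Pt) (a b c p : Pt) (ha : a ∈ S) (hb : b ∈ S) (hc : c ∈ S)
    (h1 : 0 < det3 a b p) (h2 : 0 < det3 a p c) (h3 : 0 < det3 b c p) :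
    p ∈ convexHull ℝ S := by
  have hD : det3 a b c = det3 a b p + det3 a p c + det3 b c p := by unfold det3; ring
  have hD0 : 0 < det3 a b c := by linarith
  have key : ∑ i : Fin 3, (![det3 b c p / det3 a b c, det3 a p c / det3 a b c,
      det3 a b p / det3 a b c] i) • (![a, b, c] i) ∈ convexHull ℝ S := by
    apply (convex_convexHull ℝ S).sum_mem
    · intro i _
      fin_cases i <;> simp <;> positivity
    · simp [Fin.sum_univ_three]
      field_simp
      linarith
    · intro i _
      fin_cases i <;> simp <;> apply subset_convexHull <;> assumption
  convert key using 1
  simp only [Fin.sum_univ_three]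
  ext
  · simp
    field_simp
    unfold det3; ring
  · simp
    field_simp
    unfold det3; ring

/-- Labelling of a convex point set in counterclockwise order. -/
lemma exists_label (P : Finset Pt) (hP : ConvexPos P) :
    ∃ L : Pt → ℕ, (∀ p ∈ P, L p < P.card) ∧ Set.InjOn L P ∧
      ∀ a ∈ P, ∀ b ∈ P, ∀ c ∈ P, L a < L b → L b < L c → 0 < det3 a b c := by
  classical
  rcases P.eq_empty_or_nonempty with rfl | hne
  · exact ⟨fun _ => 0, by simp, by simp, by simp⟩
  obtain ⟨o, hoP, hmin⟩ := Finset.exists_min_image P (fun p => toLex p) hne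
  obtain ⟨hG, hC⟩ := hP
  have hmin' : ∀ p ∈ P, p ≠ o → o.1 < p.1 ∨ (o.1 = p.1 ∧ o.2 < p.2) := by
    intro p hp hpo
    have h := hmin p hp
    rw [Prod.Lex.toLex_le_toLex] at h
    rcases h with h | ⟨h1, h2⟩
    · exact Or.inl h
    · refine Or.inr ⟨h1, lt_of_le_of_ne h2 ?_⟩
      intro h3
      exact hpo (Prod.ext h1.symm h3.symm)
  have hdet : ∀ a ∈ P, ∀ b ∈ P, ∀ c ∈ P, a ≠ b → a ≠ c → b ≠ c → det3 a b c ≠ 0 :=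
    fun a ha b hb c hc h1 h2 h3 h => hG a ha b hb c hc h1 h2 h3 (det3_collinear a b c h1 h)
  let R : Pt → Pt → Prop := fun a b =>
    (a = o ∧ b ≠ o) ∨ (a ≠ o ∧ b ≠ o ∧ 0 < det3 o a b)
  have hirr : ∀ a, ¬ R a a := by
    rintro a (⟨h1, h2⟩ | ⟨_, _, h⟩)
    · exact h2 h1
    · unfold det3 at h; linarith
  have htrans : ∀ a ∈ P, ∀ b ∈ P, ∀ c ∈ P, R a b → R b c → R a c := by
    rintro a ha b hb c hc (⟨h1, h2⟩ | ⟨h1, h2, h3⟩) (⟨g1, g2⟩ | ⟨g1, g2, g3⟩)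
    · exact absurd g1 h2
    · exact Or.inl ⟨h1, g2⟩
    · exact absurd g1 h2
    · refine Or.inr ⟨h1, g2, ?_⟩
      have ka := hmin' a ha h1
      have kb := hmin' b hb h2
      have kc := hmin' c hc g2
      unfold det3 at *
      obtain ⟨u1, hu1⟩ : ∃ t, t = a.1 - o.1 := ⟨_, rfl⟩
      obtain ⟨u2, hu2⟩ : ∃ t, t = a.2 - o.2 := ⟨_, rfl⟩
      obtain ⟨v1, hv1⟩ : ∃ t, t = b.1 - o.1 := ⟨_, rfl⟩
      obtain ⟨v2, hv2⟩ : ∃ t, t = b.2 - o.2 := ⟨_, rfl⟩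
      obtain ⟨w1, hw1⟩ : ∃ t, t = c.1 - o.1 := ⟨_, rfl⟩
      obtain ⟨w2, hw2⟩ : ∃ t, t = c.2 - o.2 := ⟨_, rfl⟩
      rw [← hu1, ← hu2, ← hv1, ← hv2] at h3
      rw [← hv1, ← hv2, ← hw1, ← hw2] at g3
      rw [← hu1, ← hu2, ← hw1, ← hw2]
      have ka' : 0 < u1 ∨ (u1 = 0 ∧ 0 < u2) := by
        rcases ka with h | ⟨h, h'⟩
        · left; linarith
        · right; constructor <;> linarith
      have kb' : 0 < v1 ∨ (v1 = 0 ∧ 0 < v2) := by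
        rcases kb with h | ⟨h, h'⟩
        · left; linarith
        · right; constructor <;> linarith
      have kc' : 0 < w1 ∨ (w1 = 0 ∧ 0 < w2) := by
        rcases kc with h | ⟨h, h'⟩
        · left; linarith
        · right; constructor <;> linarith
      have hw0 : 0 ≤ w1 := by rcases kc' with h | h <;> linarith
      rcases kb' with hv | ⟨hv, hv'⟩
      · rcases ka' with hu | ⟨hu, hu'⟩
        · have : v1 * (u1 * w2 - u2 * w1) = u1 * (v1 * w2 - v2 * w1) + w1 * (u1 * v2 - u2 * v1) := by
            ring
          have h5 : 0 < v1 * (u1 * w2 - u2 * w1) := by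
            rw [this]
            have := mul_pos hu g3
            have := mul_nonneg hw0 h3.le
            linarith
          exact pos_of_mul_pos_right h5 hv.le
        · subst hu
          nlinarith [mul_pos hu' hv]
      · subst hv
        nlinarith [mul_nonneg hv'.le hw0]
  have htot : ∀ a ∈ P, ∀ b ∈ P, a ≠ b → R a b ∨ R b a := by
    intro a ha b hb hab
    by_cases h1 : a = o
    · left; left; exact ⟨h1, fun h => hab (h1.trans h.symm)⟩
    by_cases h2 : b = o
    · right; left; exact ⟨h2, h1⟩
    have h3 := hdet o hoP a ha b hb (Ne.symm h1) (Ne.symm h2) hab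
    rcases lt_or_gt_of_ne h3 with h | h
    · right; right
      refine ⟨h2, h1, ?_⟩
      unfold det3 at *; linarith
    · left; right; exact ⟨h1, h2, h⟩
  let L : Pt → ℕ := fun p => (P.filter (fun q => R q p)).card
  have hmono : ∀ a ∈ P, ∀ b ∈ P, R a b → L a < L b := by
    intro a ha b hb hab
    apply Finset.card_lt_card
    rw [Finset.ssubset_iff_of_subset]
    · exact ⟨a, by simp [ha, hab], by simp [hirr]⟩
    · intro q hq
      simp only [Finset.mem_filter] at hq ⊢
      exact ⟨hq.1, htrans q hq.1 a ha b hb hq.2 hab⟩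
  have hrev : ∀ a ∈ P, ∀ b ∈ P, L a < L b → R a b := by
    intro a ha b hb hab
    have hne : a ≠ b := by rintro rfl; exact lt_irrefl _ hab
    rcases htot a ha b hb hne with h | h
    · exact h
    · exact absurd (hmono b hb a ha h) (by omega)
  refine ⟨L, ?_, ?_, ?_⟩
  · intro p hp
    apply Finset.card_lt_card
    rw [Finset.ssubset_iff_of_subset (Finset.filter_subset _ _)]
    exact ⟨p, hp, by simp [hirr]⟩
  · intro a ha b hb hab
    by_contra hne
    rcases htot a ha b hb hne with h | h
    · have := hmono a ha b hb h; omega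
    · have := hmono b hb a ha h; omega
  · intro a ha b hb c hc h1 h2
    have hab := hrev a ha b hb h1
    have hbc := hrev b hb c hc h2
    have nab : a ≠ b := by rintro rfl; exact lt_irrefl _ h1
    have nbc : b ≠ c := by rintro rfl; exact lt_irrefl _ h2
    have nac : a ≠ c := by rintro rfl; omega
    rcases hbc with ⟨g1, g2⟩ | ⟨g1, g2, g3⟩
    · rcases hab with ⟨_, f2⟩ | ⟨_, f2, _⟩ <;> exact absurd g1 f2
    rcases hab with ⟨f1, f2⟩ | ⟨f1, f2, f3⟩
    · rw [f1]; exact g3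
    by_contra hneg
    have hlt : det3 a b c < 0 := lt_of_le_of_ne (not_lt.mp hneg) (hdet a ha b hb c hc nab nac nbc)
    apply hC b hb
    apply mem_hull_of_det _ o a c b
    · simp [hoP, Ne.symm g1]
    · simp [ha, nab]
    · simp [hc, Ne.symm nbc]
    · exact f3
    · exact g3
    · unfold det3 at *; linarith

lemma no_meet (p q x y : Pt) (h : (0 < det3 p q x ∧ 0 < det3 p q y) ∨
    (det3 p q x < 0 ∧ det3 p q y < 0)) :
    ¬ (openSegment ℝ p q ∩ openSegment ℝ x y).Nonempty := by
  rintro ⟨z, ⟨a, b, ha, hb, hab, rfl⟩, ⟨c, d, hc, hd, hcd, hz⟩⟩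
  have e1 : det3 p q (a • p + b • q) = 0 := by
    unfold det3
    have : a = 1 - b := by linarith
    subst this
    simp
    ring
  have e2 : det3 p q (c • x + d • y) = c * det3 p q x + d * det3 p q y := by
    unfold det3
    have : c = 1 - d := by linarith
    subst this
    simp
    ring
  rw [← hz, e2] at e1
  rcases h with ⟨h1, h2⟩ | ⟨h1, h2⟩
  · have := mul_pos hc h1
    have := mul_pos hd h2
    linarith
  · have := mul_neg_of_pos_of_neg hc h1
    have := mul_neg_of_pos_of_neg hd h2
    linarith

lemma det3_rot (a b c : Pt) : det3 b c a = det3 a b c := by unfold det3; ring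
lemma det3_swap (a b c : Pt) : det3 a c b = - det3 a b c := by unfold det3; ring

lemma cross_elim (p q x y : Pt) (h : Cross s(p, q) s(x, y)) :
    p ≠ x ∧ p ≠ y ∧ q ≠ x ∧ q ≠ y ∧ (openSegment ℝ p q ∩ openSegment ℝ x y).Nonempty := by
  obtain ⟨h1, a, b, c, d, h2, h3, h4⟩ := h
  have hp := h1 p (by simp)
  have hq := h1 q (by simp)
  simp only [Sym2.mem_iff, not_or] at hp hq
  refine ⟨hp.1, hp.2, hq.1, hq.2, ?_⟩
  rw [Sym2.eq_iff] at h2 h3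
  rcases h2 with ⟨rfl, rfl⟩ | ⟨rfl, rfl⟩ <;> rcases h3 with ⟨rfl, rfl⟩ | ⟨rfl, rfl⟩
  · exact h4
  · rwa [openSegment_symm ℝ x y]
  · rwa [openSegment_symm ℝ p q]
  · rwa [openSegment_symm ℝ p q, openSegment_symm ℝ x y]

/-- Crossing edges have interleaving labels. -/
lemma cross_inter (P : Finset Pt) (L : Pt → ℕ) (hinj : Set.InjOn L P)
    (hL : ∀ a ∈ P, ∀ b ∈ P, ∀ c ∈ P, L a < L b → L b < L c → 0 < det3 a b c)
    (p q x y : Pt) (hp : p ∈ P) (hq : q ∈ P) (hx : x ∈ P) (hy : y ∈ P) (hpq : L p < L q)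
    (h : Cross s(p, q) s(x, y)) :
    ((L p < L x ∧ L x < L q) ∧ (L y < L p ∨ L q < L y)) ∨
    ((L p < L y ∧ L y < L q) ∧ (L x < L p ∨ L q < L x)) := by
  obtain ⟨h1, h2, h3, h4, hm⟩ := cross_elim p q x y h
  have side : ∀ z ∈ P, p ≠ z → q ≠ z →
      ((L p < L z ∧ L z < L q) ∧ det3 p q z < 0) ∨
      ((L z < L p ∨ L q < L z) ∧ 0 < det3 p q z) := by
    intro z hz g1 g2
    have n1 : L p ≠ L z := fun e => g1 (hinj hp hz e)
    have n2 : L q ≠ L z := fun e => g2 (hinj hq hz e)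
    rcases lt_or_gt_of_ne n1 with a | a
    · rcases lt_or_gt_of_ne n2 with b | b
      · exact Or.inr ⟨Or.inr b, hL p hp q hq z hz hpq b⟩
      · refine Or.inl ⟨⟨a, b⟩, ?_⟩
        rw [det3_swap]
        have := hL p hp z hz q hq a b
        linarith
    · refine Or.inr ⟨Or.inl a, ?_⟩
      rw [det3_rot]
      exact hL z hz p hp q hq a hpq
  rcases side x hx h1 h3 with ⟨a, a'⟩ | ⟨a, a'⟩ <;>
    rcases side y hy h2 h4 with ⟨b, b'⟩ | ⟨b, b'⟩
  · exact absurd hm (no_meet _ _ _ _ (Or.inr ⟨a', b'⟩))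
  · exact Or.inl ⟨a, b⟩
  · exact Or.inr ⟨b, a⟩
  · exact absurd hm (no_meet _ _ _ _ (Or.inl ⟨a', b'⟩))

/-- Index set of a triangle of pairs. -/
def tri (q : ℕ) : Finset (Σ _ : ℕ, ℕ) := (Finset.range q).sigma (fun d => Finset.range d)

lemma tri_card (q : ℕ) : (tri q).card * 2 = q * (q - 1) := by
  unfold tri
  rw [Finset.card_sigma]
  simp only [Finset.card_range]
  exact Finset.sum_range_id_mul_two q

lemma arith (n s i j x y : ℕ) (hs : 0 < s) (hix : i < x) (hxj : x < j) (hj : j < n)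
    (hy : y < n) (hyo : y < i ∨ j < y)
    (hc : ((x + y) % n) / s = ((i + j) % n) / s) :
    (∃ d t, d < s - 1 - ((i + j) % n) % s ∧ t < d ∧ x = i + t + 1 ∧ y = (j + d - t) % n) ∨
    (∃ d t, d < ((i + j) % n) % s ∧ t < d ∧ x = j - (t + 1) ∧ y = (i + n - (d - t)) % n) := by
  have e1 := Nat.div_add_mod ((x + y) % n) s
  have e2 := Nat.div_add_mod ((i + j) % n) s
  rw [hc] at e1
  have l1 := Nat.mod_lt ((x + y) % n) hs
  have l2 := Nat.mod_lt ((i + j) % n) hs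
  have hmod : ∀ m, m < 2 * n → (m % n = m ∧ m < n) ∨ (m % n = m - n ∧ n ≤ m) := by
    intro m hm
    by_cases h : m < n
    · exact Or.inl ⟨Nat.mod_eq_of_lt h, h⟩
    · refine Or.inr ⟨?_, by omega⟩
      rw [Nat.mod_eq_sub_mod (by omega), Nat.mod_eq_of_lt (by omega)]
  have m1 := hmod (x + y) (by omega)
  have m2 := hmod (i + j) (by omega)
  generalize (x + y) % n = rf at *
  generalize (i + j) % n = re at *
  generalize s * (re / s) = B at *
  generalize rf % s = sf at *
  generalize re % s = se at *
  by_cases hle : re ≤ rf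
  · left
    refine ⟨rf - re - 1, x - i - 1, by omega, by omega, by omega, ?_⟩
    have m3 := hmod (j + (rf - re - 1) - (x - i - 1)) (by omega)
    omega
  · right
    refine ⟨re - rf - 1, j - x - 1, by omega, by omega, by omega, ?_⟩
    have m3 := hmod (i + n - ((re - rf - 1) - (j - x - 1))) (by omega)
    omega

lemma count_bound (s k pp : ℕ) (hs : (s - 1) * (s - 1) ≤ 2 * k) (hp : pp < s) :
    (tri (s - 1 - pp)).card + (tri pp).card ≤ k := by
  have h1 := tri_card (s - 1 - pp)
  have h2 := tri_card pp
  have h3 : (s - 1 - pp) * (s - 1 - pp - 1) ≤ (s - 1 - pp) * (s - 1 - pp) :=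
    Nat.mul_le_mul_left _ (by omega)
  have h4 : pp * (pp - 1) ≤ pp * pp := Nat.mul_le_mul_left _ (by omega)
  obtain ⟨q, hq⟩ : ∃ q, s - 1 = pp + q := ⟨s - 1 - pp, by omega⟩
  have h5 : s - 1 - pp = q := by omega
  rw [hq] at hs
  rw [hq, Nat.add_sub_cancel_left] at h1 h3 ⊢
  nlinarith [Nat.zero_le (pp * q)]

/-- For `n` points in convex position and `k ≥ 1`, `K(P)` can be partitioned
into `⌈n / ⌈√(2k)⌉⌉` classes each of which is `k`-plane. -/
theorem stmt_3 (n : ℕ) (P : Finset Pt) (hP : ConvexPos P) (hcard : P.card = n)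
    (k : ℕ) (hk : 1 ≤ k) :
    ∃ F : Fin (⌈(n : ℝ) / (⌈Real.sqrt (2 * k)⌉₊ : ℝ)⌉₊) → Set (Sym2 Pt),
      (⋃ i, F i) = KEdges P ∧
      (Pairwise fun i j => Disjoint (F i) (F j)) ∧
      (∀ i, KPlane k (F i)) := by
  classical
  obtain ⟨L, hLn, hinj, hL⟩ := exists_label P hP
  rw [hcard] at hLn
  have hk' : (1 : ℝ) ≤ k := by exact_mod_cast hk
  have hsq : 0 < Real.sqrt (2 * k) := Real.sqrt_pos.mpr (by linarith)
  have hs : 0 < ⌈Real.sqrt (2 * k)⌉₊ := Nat.ceil_pos.mpr hsq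
  have hs2 : (⌈Real.sqrt (2 * k)⌉₊ - 1) * (⌈Real.sqrt (2 * k)⌉₊ - 1) ≤ 2 * k := by
    have h1 := Nat.ceil_lt_add_one hsq.le
    obtain ⟨m, hm⟩ : ∃ m, ⌈Real.sqrt (2 * k)⌉₊ = m + 1 := ⟨_, (Nat.succ_pred_eq_of_pos hs).symm⟩
    rw [hm] at h1 ⊢
    push_cast at h1
    have h2 : (m : ℝ) ≤ Real.sqrt (2 * k) := by linarith
    have h3 : (m : ℝ) * m ≤ 2 * k := by
      have h4 := Real.mul_self_sqrt (show (0 : ℝ) ≤ 2 * k by linarith)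
      have h5 := mul_self_le_mul_self (Nat.cast_nonneg m) h2
      linarith
    simp only [Nat.add_sub_cancel]
    exact_mod_cast h3
  generalize ⌈Real.sqrt (2 * k)⌉₊ = s at *
  have hm : n ≤ s * ⌈(n : ℝ) / (s : ℝ)⌉₊ := by
    have h1 := Nat.le_ceil ((n : ℝ) / (s : ℝ))
    have hs' : (0 : ℝ) < s := by exact_mod_cast hs
    rw [div_le_iff₀ hs'] at h1
    rw [mul_comm]
    exact_mod_cast h1
  generalize ⌈(n : ℝ) / (s : ℝ)⌉₊ = m at *
  refine ⟨fun c => {e | ∃ p ∈ P, ∃ q ∈ P, p ≠ q ∧ e = s(p, q) ∧ ((L p + L q) % n) / s = c}, ?_, ?_, ?_⟩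
  · ext e
    simp only [Set.mem_iUnion, Set.mem_setOf_eq, KEdges]
    constructor
    · rintro ⟨c, p, hp, q, hq, hpq, he, _⟩
      exact ⟨p, hp, q, hq, hpq, he⟩
    · rintro ⟨p, hp, q, hq, hpq, he⟩
      have hn : 0 < n := by have := hLn p hp; omega
      refine ⟨⟨((L p + L q) % n) / s, ?_⟩, p, hp, q, hq, hpq, he, rfl⟩
      rw [Nat.div_lt_iff_lt_mul hs, mul_comm]
      exact lt_of_lt_of_le (Nat.mod_lt _ hn) hm
  · intro c d hcd
    rw [Set.disjoint_left]
    rintro e ⟨p, hp, q, hq, hpq, he, h1⟩ ⟨p', hp', q', hq', hpq', he', h2⟩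
    apply hcd
    apply Fin.ext
    rw [← h1, ← h2]
    rw [he, Sym2.eq_iff] at he'
    rcases he' with ⟨rfl, rfl⟩ | ⟨rfl, rfl⟩
    · rfl
    · rw [add_comm]
  · intro c e he
    obtain ⟨p, hp, q, hq, hpq, rfl, hc⟩ : ∃ p ∈ P, ∃ q ∈ P, L p < L q ∧ e = s(p, q) ∧
        ((L p + L q) % n) / s = c := by
      obtain ⟨p, hp, q, hq, hpq, he, hc⟩ := he
      rcases lt_or_gt_of_ne (fun h => hpq (hinj hp hq h) : L p ≠ L q) with h | h
      · exact ⟨p, hp, q, hq, h, he, hc⟩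
      · exact ⟨q, hq, p, hp, h, he.trans Sym2.eq_swap, by rw [add_comm]; exact hc⟩
    let I : ℕ → Pt := Function.invFunOn L P
    have hI : ∀ x ∈ P, I (L x) = x := fun x hx => hinj.leftInvOn_invFunOn hx
    let g1 : (Σ _ : ℕ, ℕ) → Sym2 Pt := fun z =>
      s(I (L p + z.2 + 1), I ((L q + z.1 - z.2) % n))
    let g2 : (Σ _ : ℕ, ℕ) → Sym2 Pt := fun z =>
      s(I (L q - (z.2 + 1)), I ((L p + n - (z.1 - z.2)) % n))
    let pp := ((L p + L q) % n) % s
    let T : Finset (Sym2 Pt) := (tri (s - 1 - pp)).image g1 ∪ (tri pp).image g2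
    have hT : T.card ≤ k := by
      refine (Finset.card_union_le _ _).trans ?_
      refine (add_le_add Finset.card_image_le Finset.card_image_le).trans ?_
      exact count_bound s k pp hs2 (Nat.mod_lt _ hs)
    have main : ∀ x ∈ P, ∀ y ∈ P, ((L x + L y) % n) / s = c → L p < L x → L x < L q →
        (L y < L p ∨ L q < L y) → s(x, y) ∈ T := by
      intro x hx y hy hxy h1 h2 h3
      rcases arith n s (L p) (L q) (L x) (L y) hs h1 h2 (hLn q hq) (hLn y hy) h3
        (hxy.trans hc.symm) with ⟨d, t, hd, ht, ex, ey⟩ | ⟨d, t, hd, ht, ex, ey⟩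
      · apply Finset.mem_union_left
        refine Finset.mem_image.mpr ⟨⟨d, t⟩, by simp [tri, pp, hd, ht], ?_⟩
        simp only [g1]
        rw [← ex, ← ey, hI x hx, hI y hy]
      · apply Finset.mem_union_right
        refine Finset.mem_image.mpr ⟨⟨d, t⟩, by simp [tri, pp, hd, ht], ?_⟩
        simp only [g2]
        rw [← ex, ← ey, hI x hx, hI y hy]
    refine le_trans ?_ hT
    rw [← Set.ncard_coe_finset]
    apply Set.ncard_le_ncard _ T.finite_toSet
    rintro f ⟨⟨x, hx, y, hy, hxy, rfl, hf⟩, hcr⟩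
    rcases cross_inter P L hinj hL p q x y hp hq hx hy hpq hcr with ⟨⟨h1, h2⟩, h3⟩ | ⟨⟨h1, h2⟩, h3⟩
    · exact main x hx y hy hf h1 h2 h3
    · rw [Sym2.eq_swap]
      exact main y hy x hx (by rw [add_comm]; exact hf) h1 h2 h3
end

section
/- Let k ≥ 5 be an integer and let G be a geometric graph on a set of n points in convex position such that every edge of G crosses at most k other edges of G. Then the number of edges of G is at most √(243·k/40)·n. -/
/-! ### Combinatorial part: a vertex of small degree -/

lemma sum_min_aux (q m : ℕ) :
    2 * ∑ i ∈ Finset.range (q + m), min (i + 1) q + q * q = 2 * (q + m) * q + q := by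
  have h0 : ∀ r, r ≤ q → 2 * ∑ i ∈ Finset.range r, min (i + 1) q = r * r + r := by
    intro r
    induction r with
    | zero => intro _; simp
    | succ r ih =>
      intro h
      rw [Finset.sum_range_succ, mul_add, ih (by omega), min_eq_left h]
      ring
  induction m with
  | zero => rw [add_zero, h0 q le_rfl]; ring
  | succ m ih =>
    rw [← add_assoc, Finset.sum_range_succ, min_eq_right (by omega : q ≤ q + m + 1)]
    nlinarith

lemma comb_aux (n k D q : ℕ) (A : ℕ → ℕ → Prop) (hn : 0 < n)
    (hsymm : ∀ i j, A i j → A j i) (hirr : ∀ i, ¬ A i i)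
    (hq : 2 * q ≤ D) (hk : k + 1 ≤ q * (D - q))
    (hdeg : ∀ i < n, ∃ N : Finset ℕ, D + 1 ≤ N.card ∧ ∀ j ∈ N, j < n ∧ A i j) :
    ∃ a b, a < b ∧ b < n ∧ A a b ∧ ∃ T : Finset (ℕ × ℕ), k < T.card ∧
      ∀ p ∈ T, a < p.1 ∧ p.1 < b ∧ (p.2 < a ∨ b < p.2) ∧ p.2 < n ∧ A p.1 p.2 := by
  classical
  have hex : ∃ l, ∃ a, a + (q + l) + 1 < n ∧ A a (a + (q + l) + 1) := by
    obtain ⟨N, hN, hN'⟩ := hdeg 0 hn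
    by_contra hcon
    push Not at hcon
    have hsub : N ⊆ Finset.Icc 1 q := by
      intro j hj
      obtain ⟨h1, h2⟩ := hN' j hj
      rw [Finset.mem_Icc]
      refine ⟨?_, ?_⟩
      · rcases Nat.eq_zero_or_pos j with h | h
        · subst h; exact absurd h2 (hirr 0)
        · exact h
      · by_contra h
        have h3 : 0 + (q + (j - q - 1)) + 1 = j := by omega
        have := hcon (j - q - 1) 0 (by omega)
        rw [h3] at this
        exact this h2
    have := Finset.card_le_card hsub
    rw [Nat.card_Icc] at this
    omega
  obtain ⟨a, hab, hA⟩ := Nat.find_spec hex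
  have hmin := fun m (hm : m < Nat.find hex) => Nat.find_min hex hm
  generalize Nat.find hex = m at hab hA hmin
  push Not at hmin
  set L := q + m with hL
  have hshort : ∀ u v, u + q + 1 ≤ v → v < n → A u v → L + 1 ≤ v - u := by
    intro u v huv hv hAuv
    by_contra h
    refine hmin (v - u - 1 - q) (by omega) u (by omega) ?_
    have : u + (q + (v - u - 1 - q)) + 1 = v := by omega
    rwa [this]
  choose! N hN hN' using hdeg
  set b := a + L + 1 with hb
  refine ⟨a, b, by omega, hab, hA, ?_⟩
  let O : ℕ → Finset ℕ := fun i => (N (a + 1 + i)).filter (fun d => d < a ∨ b < d)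
  have hO : ∀ i ∈ Finset.range L,
      D + 1 ≤ (O i).card + min (i + 1) q + min (L - 1 - i + 1) q := by
    intro i hi
    rw [Finset.mem_range] at hi
    have hc : a + 1 + i < n := by omega
    have hsub : N (a + 1 + i) ⊆ (O i ∪ Finset.Ico (a + 1 + i - min (i + 1) q) (a + 1 + i)) ∪
        Finset.Ioc (a + 1 + i) (a + 1 + i + min (L - 1 - i + 1) q) := by
      intro j hj
      obtain ⟨hj1, hj2⟩ := hN' _ hc j hj
      simp only [Finset.mem_union, Finset.mem_Ico, Finset.mem_Ioc, O, Finset.mem_filter]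
      by_cases hout : j < a ∨ b < j
      · exact Or.inl (Or.inl ⟨hj, hout⟩)
      · push Not at hout
        rcases lt_trichotomy j (a + 1 + i) with h | h | h
        · left; right
          refine ⟨?_, h⟩
          by_contra hlt
          have := hshort j (a + 1 + i) (by omega) hc (hsymm _ _ hj2)
          omega
        · subst h; exact absurd hj2 (hirr _)
        · right
          refine ⟨h, ?_⟩
          by_contra hlt
          have := hshort (a + 1 + i) j (by omega) hj1 hj2
          omega
    have h1 := Finset.card_le_card hsub
    have h2 := Finset.card_union_le (O i ∪ Finset.Ico (a + 1 + i - min (i + 1) q) (a + 1 + i))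
      (Finset.Ioc (a + 1 + i) (a + 1 + i + min (L - 1 - i + 1) q))
    have h3 := Finset.card_union_le (O i) (Finset.Ico (a + 1 + i - min (i + 1) q) (a + 1 + i))
    rw [Nat.card_Ioc] at h2
    rw [Nat.card_Ico] at h3
    have := hN _ hc
    omega
  have hsum := Finset.sum_le_sum hO
  have hl : ∑ i ∈ Finset.range L, (D + 1) = L * (D + 1) := by simp
  have hr : ∑ i ∈ Finset.range L, ((O i).card + min (i + 1) q + min (L - 1 - i + 1) q)
      = ∑ i ∈ Finset.range L, (O i).card + ∑ i ∈ Finset.range L, min (i + 1) q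
        + ∑ i ∈ Finset.range L, min (i + 1) q := by
    rw [Finset.sum_add_distrib, Finset.sum_add_distrib,
      Finset.sum_range_reflect (fun i => min (i + 1) q) L]
  rw [hl, hr] at hsum
  have hmins := sum_min_aux q m
  rw [← hL] at hmins
  let T : Finset (ℕ × ℕ) := (Finset.range L).biUnion
    (fun i => (O i).image (fun d => (a + 1 + i, d)))
  refine ⟨T, ?_, ?_⟩
  · have hT : T.card = ∑ i ∈ Finset.range L, (O i).card := by
      rw [Finset.card_biUnion]
      · refine Finset.sum_congr rfl fun i _ => ?_
        rw [Finset.card_image_of_injective]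
        intro x y hxy
        simpa using hxy
      · intro i _ j _ hij
        rw [Function.onFun, Finset.disjoint_left]
        intro x hx hx'
        simp only [Finset.mem_image] at hx hx'
        obtain ⟨d, _, rfl⟩ := hx
        obtain ⟨d', _, h⟩ := hx'
        simp only [Prod.mk.injEq] at h
        omega
    rw [hT]
    obtain ⟨r, rfl⟩ := Nat.exists_eq_add_of_le hq
    have h5 : 2 * q + r - q = q + r := by omega
    rw [h5] at hk
    have h6 : L = q + m := hL
    rw [h6] at hsum hmins ⊢
    nlinarith [Nat.zero_le (m * r), Nat.zero_le m]
  · intro p hp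
    simp only [T, O, Finset.mem_biUnion, Finset.mem_image, Finset.mem_filter,
      Finset.mem_range] at hp
    obtain ⟨i, hi, d, ⟨hd, hd'⟩, rfl⟩ := hp
    obtain ⟨h1, h2⟩ := hN' _ (by omega) d hd
    exact ⟨by simp only; omega, by simp only; omega, hd', h1, h2⟩

/-! ### Geometric part -/

/-- Twice the signed area of the triangle `p q r`. -/
def orient (p q r : Pt) : ℝ := (q.1 - p.1) * (r.2 - p.2) - (q.2 - p.2) * (r.1 - p.1)

lemma ConvexPos.mono {P Q : Finset Pt} (h : ConvexPos P) (hQ : Q ⊆ P) : ConvexPos Q := by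
  refine ⟨fun p hp q hq r hr => h.1 p (hQ hp) q (hQ hq) r (hQ hr), fun p hp hc => ?_⟩
  refine h.2 p (hQ hp) (convexHull_mono ?_ hc)
  exact_mod_cast Finset.erase_subset_erase p hQ

lemma collinear_of_orient {p q r : Pt} (hpq : p ≠ q) (h : orient p q r = 0) :
    Collinear ℝ ({p, q, r} : Set Pt) := by
  rw [collinear_iff_of_mem (p₀ := p) (by simp)]
  refine ⟨q - p, ?_⟩
  unfold orient at h
  intro x hx
  simp only [Set.mem_insert_iff, Set.mem_singleton_iff] at hx
  rcases hx with rfl | rfl | rfl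
  · exact ⟨0, by simp⟩
  · exact ⟨1, by simp⟩
  · by_cases h1 : q.1 - p.1 = 0
    · have h2 : q.2 - p.2 ≠ 0 := by
        intro h2
        exact hpq (Prod.ext (by linarith) (by linarith))
      refine ⟨(x.2 - p.2) / (q.2 - p.2), ?_⟩
      have h3 : x.1 - p.1 = 0 := by
        rw [h1] at h
        have : (q.2 - p.2) * (x.1 - p.1) = 0 := by linarith
        exact (mul_eq_zero.mp this).resolve_left h2
      ext
      · simp [h1]; linarith
      · simp; field_simp; ring
    · refine ⟨(x.1 - p.1) / (q.1 - p.1), ?_⟩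
      ext
      · simp; field_simp; ring
      · simp; field_simp; linarith

lemma orient_pos_of_convex {P : Finset Pt} (h : ConvexPos P) {o a b c : Pt}
    (ho : o ∈ P) (ha : a ∈ P) (hb : b ∈ P) (hc : c ∈ P)
    (hbo : b ≠ o) (hba : b ≠ a) (hbc : b ≠ c)
    (h1 : 0 < orient o a b) (h2 : 0 < orient o b c) (h3 : 0 < orient o a c) :
    0 < orient a b c := by
  by_contra hneg
  push Not at hneg
  apply h.2 b hb
  have hconv := convex_convexHull ℝ ((P.erase b : Finset Pt) : Set Pt)
  have mem : ∀ x ∈ P, b ≠ x → x ∈ convexHull ℝ ((P.erase b : Finset Pt) : Set Pt) := by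
    intro x hx hxb
    apply subset_convexHull
    simp [hx, Ne.symm hxb]
  have hkey : ∀ w : Fin 3 → ℝ, ∀ z : Fin 3 → Pt, (∀ i, 0 ≤ w i) → ∑ i, w i = 1 →
      (∀ i, z i ∈ convexHull ℝ ((P.erase b : Finset Pt) : Set Pt)) →
      ∑ i, w i • z i ∈ convexHull ℝ ((P.erase b : Finset Pt) : Set Pt) :=
    fun w z hw hs hz => hconv.sum_mem (fun i _ => hw i) hs (fun i _ => hz i)
  have := hkey ![-orient a b c / orient o a c, orient o b c / orient o a c,
    orient o a b / orient o a c] ![o, a, c] ?_ ?_ ?_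
  · convert this using 1
    simp only [Fin.sum_univ_three, Matrix.cons_val_zero, Matrix.cons_val_one, Matrix.cons_val]
    have h3' := h3.ne'
    ext
    · simp
      field_simp
      unfold orient
      ring
    · simp
      field_simp
      unfold orient
      ring
  · intro i
    fin_cases i
    · exact div_nonneg (by linarith) h3.le
    · exact div_nonneg h2.le h3.le
    · exact div_nonneg h1.le h3.le
  · simp only [Fin.sum_univ_three, Matrix.cons_val_zero, Matrix.cons_val_one, Matrix.cons_val]
    have h3' := h3.ne'
    field_simp
    unfold orient
    ring
  · intro i
    fin_cases i
    · exact mem o ho hbo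
    · exact mem a ha hba
    · exact mem c hc hbc

lemma lex_trans {u1 u2 v1 v2 w1 w2 : ℝ} (hu : 0 < u1 ∨ (u1 = 0 ∧ 0 < u2))
    (hv : 0 < v1 ∨ (v1 = 0 ∧ 0 < v2)) (hw : 0 < w1 ∨ (w1 = 0 ∧ 0 < w2))
    (h1 : 0 < u1 * v2 - u2 * v1) (h2 : 0 < v1 * w2 - v2 * w1) : 0 < u1 * w2 - u2 * w1 := by
  have hu1 : 0 ≤ u1 := by rcases hu with h | h; exacts [h.le, h.1.ge]
  have hw1 : 0 ≤ w1 := by rcases hw with h | h; exacts [h.le, h.1.ge]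
  have hv1 : 0 < v1 := by
    rcases hv with h | ⟨h, h'⟩
    · exact h
    · subst h; nlinarith [mul_nonneg h'.le hw1]
  have hu1' : 0 < u1 := by
    rcases hu with h | ⟨h, h'⟩
    · exact h
    · subst h; nlinarith [mul_pos h' hv1]
  have key : v1 * (u1 * w2 - u2 * w1)
      = u1 * (v1 * w2 - v2 * w1) + w1 * (u1 * v2 - u2 * v1) := by ring
  have : 0 < v1 * (u1 * w2 - u2 * w1) := by
    rw [key]
    have := mul_pos hu1' h2
    have := mul_nonneg hw1 h1.le
    linarith
  exact pos_of_mul_pos_right this hv1.le |> fun h => h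

lemma exists_lex_min {P : Finset Pt} (hne : P.Nonempty) :
    ∃ o ∈ P, ∀ p ∈ P, p ≠ o → 0 < p.1 - o.1 ∨ (p.1 - o.1 = 0 ∧ 0 < p.2 - o.2) := by
  obtain ⟨o, ho, hmin⟩ := Finset.exists_min_image P (fun p => toLex (p.1, p.2)) hne
  refine ⟨o, ho, fun p hp hpo => ?_⟩
  have := hmin p hp
  rw [Prod.Lex.toLex_le_toLex] at this
  rcases this with h | ⟨h, h'⟩
  · left; simp only at h; linarith
  · right
    simp only at h h'
    refine ⟨by linarith, ?_⟩
    rcases h'.lt_or_eq with h'' | h''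
    · linarith
    · exact absurd (Prod.ext h.symm h''.symm) hpo

lemma exists_enum_s6 {α : Type*} [Fintype α] (R : α → α → Prop) (hR : IsStrictTotalOrder α R)
    (n : ℕ) (hn : Fintype.card α = n) :
    ∃ e : Fin n ≃ α, ∀ i j, i < j → R (e i) (e j) := by
  classical
  let _ : LinearOrder α := linearOrderOfSTO R
  let e := Fintype.orderIsoFinOfCardEq α hn
  exact ⟨e.toEquiv, fun i j h => e.strictMono h⟩

lemma exists_order {P : Finset Pt} (hP : ConvexPos P) (hne : P.Nonempty) :
    ∃ f : ℕ → Pt, (∀ i < P.card, f i ∈ P) ∧ (∀ p ∈ P, ∃ i < P.card, f i = p) ∧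
      (∀ i < P.card, ∀ j < P.card, f i = f j → i = j) ∧
      ∀ i j l, i < j → j < l → l < P.card → 0 < orient (f i) (f j) (f l) := by
  classical
  obtain ⟨o, ho, hmin⟩ := exists_lex_min hne
  let R : {x // x ∈ P} → {x // x ∈ P} → Prop :=
    fun p q => q.1 ≠ o ∧ (p.1 = o ∨ 0 < orient o p.1 q.1)
  have hR : IsStrictTotalOrder {x // x ∈ P} R := by
    refine { irrefl := ?irr, trans := ?tra, trichotomous := ?tri }
    case irr =>
      rintro p ⟨h1, h2 | h2⟩
      · exact h1 h2
      · unfold orient at h2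
        nlinarith
    case tra =>
      rintro p q r ⟨h1, h2⟩ ⟨h3, h4⟩
      refine ⟨h3, ?_⟩
      by_cases hp : p.1 = o
      · exact Or.inl hp
      · right
        exact lex_trans (hmin p p.2 hp) (hmin q q.2 h1) (hmin r r.2 h3)
          (h2.resolve_left hp) (h4.resolve_left h1)
    case tri =>
      intro p q hpq hqp
      by_contra hne
      have hne' : p.1 ≠ q.1 := fun h => hne (Subtype.ext h)
      by_cases hp : p.1 = o
      · exact hpq ⟨fun h => hne' (hp.trans h.symm), Or.inl hp⟩
      by_cases hq : q.1 = o
      · exact hqp ⟨hp, Or.inl hq⟩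
      rcases lt_trichotomy (orient o p.1 q.1) 0 with h | h | h
      · refine hqp ⟨hp, Or.inr ?_⟩
        unfold orient at h ⊢
        linarith
      · exact hP.1 o ho p p.2 q q.2 (Ne.symm hp) (Ne.symm hq) hne'
          (collinear_of_orient (Ne.symm hp) h)
      · exact hpq ⟨hq, Or.inr h⟩
  obtain ⟨e, he⟩ := exists_enum_s6 R hR P.card (Fintype.card_coe P)
  let f : ℕ → Pt := fun i => if h : i < P.card then (e ⟨i, h⟩).1 else o
  have hf : ∀ i (h : i < P.card), f i = (e ⟨i, h⟩).1 := fun i h => by simp only [f, dif_pos h]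
  have hfR : ∀ i j, i < j → j < P.card → f j ≠ o ∧ (f i = o ∨ 0 < orient o (f i) (f j)) := by
    intro i j hij hj
    rw [hf i (hij.trans hj), hf j hj]
    exact he _ _ (by simpa using hij)
  have hfm : ∀ i < P.card, f i ∈ P := fun i hi => by rw [hf i hi]; exact (e ⟨i, hi⟩).2
  have hfi : ∀ i < P.card, ∀ j < P.card, f i = f j → i = j := by
    intro i hi j hj h
    rw [hf i hi, hf j hj] at h
    simpa using e.injective (Subtype.ext h)
  refine ⟨f, hfm, ?_, hfi, ?_⟩
  · intro p hp
    obtain ⟨i, hi⟩ := e.surjective ⟨p, hp⟩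
    refine ⟨i, i.2, ?_⟩
    rw [hf i i.2]
    simp [hi]
  · intro i j l hij hjl hl
    have h1 := hfR i j hij (hjl.trans hl)
    have h2 := hfR j l hjl hl
    have h3 := hfR i l (hij.trans hjl) hl
    have h2' := h2.2.resolve_left h1.1
    by_cases hi : f i = o
    · rw [hi]; exact h2'
    · refine orient_pos_of_convex hP ho (hfm i (by omega)) (hfm j (by omega)) (hfm l hl) h1.1
        ?_ ?_ (h1.2.resolve_left hi) h2' (h3.2.resolve_left hi)
      · intro h
        have := hfi _ (by omega) _ (by omega) h
        omega
      · intro h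
        have := hfi _ (by omega) _ (by omega) h
        omega

lemma segments_meet {a c b d : Pt} (h1 : 0 < orient a c b) (h2 : 0 < orient a b d)
    (h3 : 0 < orient a c d) (h4 : 0 < orient c b d) :
    (openSegment ℝ a b ∩ openSegment ℝ c d).Nonempty := by
  have hsum : orient a c b + orient a b d = orient a c d + orient c b d := by
    unfold orient; ring
  have hpos : 0 < orient a c d + orient c b d := by linarith
  have hpos' := hpos.ne'
  refine ⟨(orient c b d / (orient a c d + orient c b d)) • a +
    (orient a c d / (orient a c d + orient c b d)) • b, ⟨_, _, div_pos h4 hpos,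
      div_pos h3 hpos, by field_simp; ring, rfl⟩, ⟨orient a b d / (orient a c d + orient c b d),
      orient a c b / (orient a c d + orient c b d), div_pos h2 hpos, div_pos h1 hpos, ?_, ?_⟩⟩
  · field_simp; linarith
  · ext
    · simp
      field_simp
      unfold orient
      ring
    · simp
      field_simp
      unfold orient
      ring

lemma KEdges_finite (P : Finset Pt) : (KEdges P).Finite := by
  refine ((P ×ˢ P).finite_toSet.image (fun x => s(x.1, x.2))).subset ?_
  rintro e ⟨p, hp, q, hq, _, rfl⟩
  exact ⟨(p, q), by simp [hp, hq], rfl⟩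

/-- A convex `k`-plane geometric graph has a vertex of degree at most `D`. -/
lemma exists_small_degree (k D q : ℕ) (hq : 2 * q ≤ D) (hkD : k + 1 ≤ q * (D - q))
    (P : Finset Pt) (hP : ConvexPos P) (hne : P.Nonempty)
    (E : Set (Sym2 Pt)) (hE : E ⊆ KEdges P) (hkp : KPlane k E) :
    ∃ v ∈ P, {e | e ∈ E ∧ v ∈ e}.ncard ≤ D := by
  classical
  obtain ⟨f, hfm, hfs, hfi, hfo⟩ := exists_order hP hne
  have hEfin : E.Finite := (KEdges_finite P).subset hE
  have hEne : ∀ p r : Pt, s(p, r) ∈ E → p ∈ P ∧ r ∈ P ∧ p ≠ r := by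
    intro p r h
    obtain ⟨x, hx, y, hy, hxy, he⟩ := hE h
    rcases Sym2.eq_iff.mp he with ⟨rfl, rfl⟩ | ⟨rfl, rfl⟩
    · exact ⟨hx, hy, hxy⟩
    · exact ⟨hy, hx, hxy.symm⟩
  by_contra hcon
  push Not at hcon
  obtain ⟨a, b, hab, hb, hA, T, hT, hT'⟩ := comb_aux P.card k D q
    (fun i j => s(f i, f j) ∈ E) hne.card_pos
    (fun i j h => by rwa [Sym2.eq_swap]) (fun i h => (hEne _ _ h).2.2 rfl) hq hkD (by
      intro i hi
      refine ⟨(Finset.range P.card).filter (fun j => s(f i, f j) ∈ E), ?_, ?_⟩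
      · have h1 := hcon (f i) (hfm i hi)
        have h2 : {e | e ∈ E ∧ f i ∈ e} ⊆ (((Finset.range P.card).filter
            (fun j => s(f i, f j) ∈ E)).image (fun j => s(f i, f j)) : Finset (Sym2 Pt)) := by
          rintro e ⟨he, hv⟩
          obtain ⟨y, rfl⟩ := Sym2.mem_iff_exists.mp hv
          obtain ⟨j, hj, rfl⟩ := hfs y (hEne _ _ he).2.1
          simp only [Finset.coe_image, Finset.coe_filter, Finset.mem_range, Set.mem_image,
            Set.mem_ofPred_eq]
          exact ⟨j, ⟨hj, he⟩, rfl⟩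
        have h3 := Set.ncard_le_ncard h2 (Finset.finite_toSet _)
        rw [Set.ncard_coe_finset] at h3
        exact (h1.trans_le h3).trans_le Finset.card_image_le
      · intro j hj
        simpa using hj)
  have hbound := hkp _ hA
  have hinj : Set.InjOn (fun p : ℕ × ℕ => s(f p.1, f p.2)) (T : Set (ℕ × ℕ)) := by
    rintro ⟨c, d⟩ hp ⟨c', d'⟩ hp' h
    have h1 := hT' _ hp
    have h2 := hT' _ hp'
    simp only at h h1 h2
    rcases Sym2.eq_iff.mp h with ⟨h3, h4⟩ | ⟨h3, h4⟩
    · rw [hfi c (by omega) c' (by omega) h3, hfi d (by omega) d' (by omega) h4]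
    · have := hfi c (by omega) d' (by omega) h3
      omega
  have hsub : ((T.image (fun p : ℕ × ℕ => s(f p.1, f p.2)) : Finset (Sym2 Pt)) : Set (Sym2 Pt))
      ⊆ {g | g ∈ E ∧ Cross s(f a, f b) g} := by
    intro g hg
    simp only [Finset.coe_image, Set.mem_image] at hg
    obtain ⟨⟨c, d⟩, hp, rfl⟩ := hg
    obtain ⟨h1, h2, h3, h4, h5⟩ := hT' _ hp
    simp only at h1 h2 h3 h4 h5 ⊢
    refine ⟨h5, ?_, ?_⟩
    · intro x hx hx'
      rw [Sym2.mem_iff] at hx hx'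
      rcases hx with rfl | rfl <;> rcases hx' with h | h <;>
        · have := hfi _ (by omega) _ (by omega) h
          omega
    · rcases h3 with h3 | h3
      · refine ⟨f a, f b, f d, f c, rfl, Sym2.eq_swap, ?_⟩
        rw [Set.inter_comm]
        exact segments_meet (hfo _ _ _ (by omega) (by omega) (by omega))
          (hfo _ _ _ (by omega) (by omega) (by omega))
          (hfo _ _ _ (by omega) (by omega) (by omega))
          (hfo _ _ _ (by omega) (by omega) (by omega))
      · refine ⟨f a, f b, f c, f d, rfl, rfl, ?_⟩
        exact segments_meet (hfo _ _ _ (by omega) (by omega) (by omega))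
          (hfo _ _ _ (by omega) (by omega) (by omega))
          (hfo _ _ _ (by omega) (by omega) (by omega))
          (hfo _ _ _ (by omega) (by omega) (by omega))
  have h6 := Set.ncard_le_ncard hsub (hEfin.subset fun g hg => hg.1)
  rw [Set.ncard_coe_finset, Finset.card_image_of_injOn hinj] at h6
  omega

lemma edges_le (k D q : ℕ) (hq : 2 * q ≤ D) (hkD : k + 1 ≤ q * (D - q)) (n : ℕ) :
    ∀ (P : Finset Pt), ConvexPos P → P.card = n →
    ∀ (E : Set (Sym2 Pt)), E ⊆ KEdges P → KPlane k E → E.ncard ≤ D * n := by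
  classical
  induction n with
  | zero =>
    intro P _ hc E hE _
    rw [Finset.card_eq_zero] at hc
    subst hc
    have : E = ∅ := by
      rw [Set.eq_empty_iff_forall_notMem]
      intro e he
      obtain ⟨p, hp, _⟩ := hE he
      simp at hp
    simp [this]
  | succ n ih =>
    intro P hP hc E hE hkp
    have hEfin : E.Finite := (KEdges_finite P).subset hE
    obtain ⟨v, hv, hdeg⟩ := exists_small_degree k D q hq hkD P hP
      (Finset.card_pos.mp (by omega)) E hE hkp
    have h1 := ih (P.erase v) (hP.mono (Finset.erase_subset _ _))
      (by rw [Finset.card_erase_of_mem hv]; omega) {e | e ∈ E ∧ v ∉ e} (by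
        rintro e ⟨he, hve⟩
        obtain ⟨p, hp, r, hr, hpr, rfl⟩ := hE he
        rw [Sym2.mem_iff] at hve
        push Not at hve
        exact ⟨p, Finset.mem_erase.mpr ⟨hve.1.symm, hp⟩, r,
          Finset.mem_erase.mpr ⟨hve.2.symm, hr⟩, hpr, rfl⟩) (by
        rintro e ⟨he, _⟩
        refine le_trans (Set.ncard_le_ncard ?_ (hEfin.subset fun g hg => hg.1)) (hkp e he)
        rintro g ⟨⟨hg, _⟩, hg'⟩
        exact ⟨hg, hg'⟩)
    have h2 : E ⊆ {e | e ∈ E ∧ v ∉ e} ∪ {e | e ∈ E ∧ v ∈ e} := by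
      intro e he
      by_cases h : v ∈ e
      · exact Or.inr ⟨he, h⟩
      · exact Or.inl ⟨he, h⟩
    have h3 := Set.ncard_le_ncard h2 (hEfin.subset (by
      rintro e (h | h)
      · exact h.1
      · exact h.1))
    have h4 := Set.ncard_union_le {e | e ∈ E ∧ v ∉ e} {e | e ∈ E ∧ v ∈ e}
    rw [mul_add, mul_one]
    omega

lemma exists_D (k : ℕ) (hk : 5 ≤ k) :
    ∃ D q : ℕ, 2 * q ≤ D ∧ k + 1 ≤ q * (D - q) ∧ 40 * (D * D) ≤ 243 * k := by
  have h1 := Nat.sqrt_le (4 * k + 1)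
  have h2 := Nat.sqrt_lt_self (n := 4 * k + 1) (by omega)
  have h3 := Nat.lt_succ_sqrt (4 * k + 1)
  rw [Nat.succ_eq_add_one] at h3
  generalize Nat.sqrt (4 * k + 1) = s at h1 h2 h3
  have hs : s + 1 ≤ k := by
    by_contra h
    have h5 : k ≤ s := by omega
    nlinarith [Nat.mul_le_mul h5 h5]
  refine ⟨s + 1, (s + 1) / 2, by omega, ?_, by nlinarith⟩
  rcases Nat.even_or_odd' (s + 1) with ⟨c, hc | hc⟩
  · rw [hc] at h3 ⊢
    have e1 : 2 * c / 2 = c := by omega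
    have e2 : 2 * c - c = c := by omega
    rw [e1, e2]
    by_contra h
    have : c * c ≤ k := by omega
    nlinarith
  · rw [hc] at h3 ⊢
    have e1 : (2 * c + 1) / 2 = c := by omega
    have e2 : 2 * c + 1 - c = c + 1 := by omega
    rw [e1, e2]
    by_contra h
    have : c * (c + 1) ≤ k := by omega
    nlinarith

/-- For `k ≥ 5`, a convex `k`-plane geometric graph on `n` vertices has at most
`√(243·k/40)·n` edges. -/
theorem stmt_6 (k : ℕ) (hk : 5 ≤ k) (n : ℕ)
    (P : Finset Pt) (hP : ConvexPos P) (hcard : P.card = n)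
    (E : Set (Sym2 Pt)) (hE : E ⊆ KEdges P) (hkp : KPlane k E) :
    (E.ncard : ℝ) ≤ Real.sqrt (243 * (k : ℝ) / 40) * n := by
  obtain ⟨D, q, hq, hkD, hD⟩ := exists_D k hk
  have h := edges_le k D q hq hkD n P hP hcard E hE hkp
  have h1 : (E.ncard : ℝ) ≤ (D : ℝ) * n := by exact_mod_cast h
  refine h1.trans (mul_le_mul_of_nonneg_right ?_ (Nat.cast_nonneg n))
  apply Real.le_sqrt_of_sq_le
  have h2 : (40 : ℝ) * ((D : ℝ) * D) ≤ 243 * k := by exact_mod_cast hD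
  rw [le_div_iff₀ (by norm_num)]
  nlinarith
end
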